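/- Let s ∈ (0,1) and n ∈ ℕ∪{0}, and set p_n(x) = C_n^{(s+1/2)}(2x−1). Then for the weighted fractional Laplacian on the interval (0,1), for every x ∈ (0,1), (−Δ)^s_ω p_n(x) = (Γ(2s+n+1)/n!) · p_n(x). -/

import Mathlib

open MeasureTheory Filter Set

/-- The normalization constant `C₁(s) = 2^{2s} s Γ(s+1/2) / (√π Γ(1−s))`. -/
noncomputable def C1 (s : ℝ) : ℝ :=
  2 ^ (2 * s) * s * Real.Gamma (s + 1 / 2) / (Real.sqrt Real.pi * Real.Gamma (1 - s))

/-- `WFL s a b φ x L` means the weighted fractional Laplacian `(−Δ)^s_ω φ (x)`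
on the interval `(a,b)` (defined as a principal value) exists and equals `L`. -/
def WFL (s a b : ℝ) (φ : ℝ → ℝ) (x L : ℝ) : Prop :=
  Filter.Tendsto
    (fun ε : ℝ => (C1 s / (2 * s)) *
      ∫ y in Set.Ioo a b \ Set.Ioo (x - ε) (x + ε),
        Real.sign (x - y) * |x - y| ^ (-(2 * s)) *
          deriv (fun t => (t - a) ^ s * (b - t) ^ s * φ t) y)
    (nhdsWithin 0 (Set.Ioi 0)) (nhds L)

/-- The Gegenbauer polynomials `C_n^{(λ)}`, defined by their three-term recurrence. -/
noncomputable def gegen (l : ℝ) : ℕ → ℝ → ℝ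
  | 0, _ => 1
  | 1, x => 2 * l * x
  | (n + 2), x =>
      (2 * x * ((n : ℝ) + 2 + l - 1) * gegen l (n + 1) x
        - ((n : ℝ) + 2 + 2 * l - 2) * gegen l n x) / ((n : ℝ) + 2)

/-!
Write `C_n` for the Gegenbauer polynomial of parameter `s + 1/2`, `K(y)` for the kernel
`sgn(x - y) |x - y|^(-2s) (y(1 - y))^(s - 1)` and `Q_n` for the polynomial with
`d/dy [(y(1 - y))^s C_n(2y - 1)] = (y(1 - y))^(s - 1) Q_n(y)`; up to constants the claim is that the
principal value of `K Q_n` is a multiple of `C_n(2x - 1)`.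

* The involution of `[0, 1]` by a projective map that swaps the endpoints and fixes `x` sends `K dy`
  to `K dy`, with reversed orientation. Folding the principal value along it shows that `K` has
  principal value `0`, and turns the principal value of `K y` into a Beta integral, in the variable
  `v = (x - y)² / (x²(1 - y) + (1 - x)² y)`. This settles `n = 0`.
* Modulo the derivatives of `|x - y|^(1 - 2s) (y(1 - y))^s C_n(2y - 1)`, whose principal values
  vanish, `Q_n` satisfies a three-term recurrence whose middle coefficient is linear in `2x - 1`.
  After normalization by `Γ(2s + n + 1) / n!` it is the recurrence of `C_n(2x - 1)`.
-/

open Asymptotics Topology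

/-- The Cauchy principal value of `∫ y in a..b, f y` at the singular point `x` exists and is `L`.
Integrability of the truncations is part of the notion: otherwise a truncated integral could be the
junk value `0`, and principal values would not be additive. -/
def HasPrincipalValue (f : ℝ → ℝ) (a b x L : ℝ) : Prop :=
  (∀ ε > 0, IntegrableOn f (Ioo a b \ Ioo (x - ε) (x + ε))) ∧
    Tendsto (fun ε => ∫ y in Ioo a b \ Ioo (x - ε) (x + ε), f y) (𝓝[>] 0) (𝓝 L)

section PrincipalValue

variable {f g : ℝ → ℝ} {a b x L M : ℝ}

namespace HasPrincipalValue

theorem add (hf : HasPrincipalValue f a b x L) (hg : HasPrincipalValue g a b x M) :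
    HasPrincipalValue (fun y => f y + g y) a b x (L + M) := by
  refine ⟨fun ε hε => (hf.1 ε hε).add (hg.1 ε hε), (hf.2.add hg.2).congr' ?_⟩
  filter_upwards [self_mem_nhdsWithin] with ε hε
  exact (integral_add (hf.1 ε hε) (hg.1 ε hε)).symm

theorem const_mul (hf : HasPrincipalValue f a b x L) (c : ℝ) :
    HasPrincipalValue (fun y => c * f y) a b x (c * L) := by
  refine ⟨fun ε hε => (hf.1 ε hε).const_mul c, ?_⟩
  simpa only [integral_const_mul] using hf.2.const_mul c

theorem congr (hf : HasPrincipalValue f a b x L) (hfg : EqOn f g (Ioo a b)) :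
    HasPrincipalValue g a b x L := by
  have hmeas (ε : ℝ) : MeasurableSet (Ioo a b \ Ioo (x - ε) (x + ε)) :=
    measurableSet_Ioo.diff measurableSet_Ioo
  have hfg' (ε : ℝ) : EqOn f g (Ioo a b \ Ioo (x - ε) (x + ε)) := hfg.mono sdiff_subset
  refine ⟨fun ε hε => (hf.1 ε hε).congr_fun (hfg' ε) (hmeas ε), hf.2.congr fun ε => ?_⟩
  exact setIntegral_congr_fun (hmeas ε) (hfg' ε)

end HasPrincipalValue

theorem Ioo_diff_Ioo_eq_union {c d : ℝ} (hcb : c < b) (had : a < d) :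
    Ioo a b \ Ioo c d = Ioc a c ∪ Ico d b := by
  grind

theorem intervalIntegrable_of_integrableOn_Ioo_diff_Ioo {c d : ℝ} (hac : a ≤ c) (hcd : c < d)
    (hdb : d ≤ b) (hf : IntegrableOn f (Ioo a b \ Ioo c d)) :
    IntervalIntegrable f volume a c ∧ IntervalIntegrable f volume d b := by
  rw [Ioo_diff_Ioo_eq_union (hcd.trans_le hdb) (hac.trans_lt hcd)] at hf
  rw [intervalIntegrable_iff_integrableOn_Ioc_of_le hac,
    intervalIntegrable_iff_integrableOn_Ico_of_le hdb]
  exact ⟨hf.left_of_union, hf.right_of_union⟩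

theorem setIntegral_Ioo_diff_Ioo {c d : ℝ} (hac : a ≤ c) (hcd : c < d) (hdb : d ≤ b)
    (hf : IntegrableOn f (Ioo a b \ Ioo c d)) :
    ∫ y in Ioo a b \ Ioo c d, f y = (∫ y in a..c, f y) + ∫ y in d..b, f y := by
  have hdisj : Disjoint (Ioc a c) (Ico d b) :=
    disjoint_left.2 fun y hy hy' => (hy.2.trans_lt hcd).not_ge hy'.1
  rw [Ioo_diff_Ioo_eq_union (hcd.trans_le hdb) (hac.trans_lt hcd)] at hf ⊢
  rw [setIntegral_union hdisj measurableSet_Ico hf.left_of_union hf.right_of_union,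
    intervalIntegral.integral_of_le hac, intervalIntegral.integral_of_le hdb,
    integral_Ico_eq_integral_Ioo, ← integral_Ioc_eq_integral_Ioo]

theorem eventually_window_subset (hax : a < x) (hxb : x < b) :
    ∀ᶠ ε in 𝓝[>] (0 : ℝ), 0 < ε ∧ a < x - ε ∧ x + ε < b := by
  filter_upwards [Ioo_mem_nhdsGT (sub_pos.2 hax), Ioo_mem_nhdsGT (sub_pos.2 hxb)] with ε h h'
  exact ⟨h.1, by linarith [h.2], by linarith [h'.2]⟩

theorem hasPrincipalValue_of_hasDerivAt {F : ℝ → ℝ} (hax : a < x) (hxb : x < b)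
    (hint : ∀ ε > 0, IntegrableOn f (Ioo a b \ Ioo (x - ε) (x + ε)))
    (hcont : ContinuousOn F (Icc a b \ {x}))
    (hderiv : ∀ y ∈ Ioo a b, y ≠ x → HasDerivAt F (f y) y)
    (hjump : Tendsto (fun ε => F (x - ε) - F (x + ε)) (𝓝[>] 0) (𝓝 0)) :
    HasPrincipalValue f a b x (F b - F a) := by
  refine ⟨hint, ?_⟩
  have hlim := hjump.const_add (F b - F a)
  rw [add_zero] at hlim
  refine hlim.congr' ?_
  filter_upwards [eventually_window_subset hax hxb] with ε ⟨hε, ha, hb⟩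
  obtain ⟨hintL, hintR⟩ :=
    intervalIntegrable_of_integrableOn_Ioo_diff_Ioo ha.le (by linarith) hb.le (hint ε hε)
  have hleft : ∫ y in a..(x - ε), f y = F (x - ε) - F a :=
    intervalIntegral.integral_eq_sub_of_hasDerivAt_of_le ha.le
      (hcont.mono fun y hy => ⟨⟨hy.1, by linarith [hy.2]⟩, ne_of_lt (by linarith [hy.2])⟩)
      (fun y hy => hderiv y ⟨hy.1, by linarith [hy.2]⟩ (ne_of_lt (by linarith [hy.2]))) hintL
  have hright : ∫ y in (x + ε)..b, f y = F b - F (x + ε) :=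
    intervalIntegral.integral_eq_sub_of_hasDerivAt_of_le hb.le
      (hcont.mono fun y hy => ⟨⟨by linarith [hy.1], hy.2⟩, ne_of_gt (by linarith [hy.1])⟩)
      (fun y hy => hderiv y ⟨by linarith [hy.1], hy.2⟩ (ne_of_gt (by linarith [hy.1]))) hintR
  rw [setIntegral_Ioo_diff_Ioo ha.le (by linarith) hb.le (hint ε hε), hleft, hright]
  ring

theorem eventually_abs_sub_le_half {ρ : ℝ → ℝ}
    (hρ : (fun ε => ρ ε - (x - ε)) =O[𝓝[>] 0] fun ε => ε ^ 2) :
    ∀ᶠ ε in 𝓝[>] (0 : ℝ), |ρ ε - (x - ε)| ≤ ε / 2 := by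
  have hsq : (fun ε : ℝ => ε ^ 2) =o[𝓝[>] 0] fun ε => ε :=
    (isLittleO_pow_id one_lt_two).mono nhdsWithin_le_nhds
  filter_upwards [(hρ.trans_isLittleO hsq).def one_half_pos, self_mem_nhdsWithin] with ε h hε
  rwa [Real.norm_eq_abs, Real.norm_of_nonneg (le_of_lt hε), one_div_mul_eq_div] at h

theorem tendsto_rpow_nhdsGT_zero {p : ℝ} (hp : 0 < p) :
    Tendsto (fun ε : ℝ => ε ^ p) (𝓝[>] 0) (𝓝 0) := by
  have hcont := (Real.continuous_rpow_const hp.le).tendsto 0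
  rw [Real.zero_rpow hp.ne'] at hcont
  exact hcont.mono_left nhdsWithin_le_nhds

theorem tendsto_intervalIntegral_of_isBigO_rpow {ρ : ℝ → ℝ} {p : ℝ} (hp₀ : 0 ≤ p) (hp₂ : p < 2)
    (hf : f =O[𝓝[<] x] fun y => (x - y) ^ (-p))
    (hρ : (fun ε => ρ ε - (x - ε)) =O[𝓝[>] 0] fun ε => ε ^ 2) :
    Tendsto (fun ε => ∫ y in ρ ε..(x - ε), f y) (𝓝[>] 0) (𝓝 0) := by
  obtain ⟨C, hC, hfC⟩ := hf.exists_pos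
  obtain ⟨l, hl : l < x, hfl⟩ := mem_nhdsLT_iff_exists_Ioo_subset.1 hfC.bound
  have hbound : (fun ε => ∫ y in ρ ε..(x - ε), f y) =O[𝓝[>] 0]
      fun ε => (ε / 2) ^ (-p) * (ρ ε - (x - ε)) := by
    refine IsBigO.of_bound C ?_
    filter_upwards [eventually_abs_sub_le_half hρ,
      Ioo_mem_nhdsGT (half_pos (sub_pos.2 hl))] with ε hρε ⟨hε, hεl⟩
    obtain ⟨hlow, hhigh⟩ := abs_le.1 hρε
    have hpt : ∀ y ∈ uIoc (ρ ε) (x - ε), ‖f y‖ ≤ C * (ε / 2) ^ (-p) := by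
      intro y hy
      have hy_low : x - 3 / 2 * ε < y := lt_of_le_of_lt (le_min (by linarith) (by linarith)) hy.1
      have hy_high : y ≤ x - ε / 2 := hy.2.trans (max_le (by linarith) (by linarith))
      have hfy : ‖f y‖ ≤ C * ‖(x - y) ^ (-p)‖ := hfl ⟨by linarith, by linarith⟩
      rw [Real.norm_of_nonneg (Real.rpow_nonneg (by linarith) _)] at hfy
      refine hfy.trans (mul_le_mul_of_nonneg_left ?_ hC.le)
      exact Real.rpow_le_rpow_of_nonpos (by linarith) (by linarith) (by linarith)
    refine (intervalIntegral.norm_integral_le_of_norm_le_const hpt).trans_eq ?_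
    rw [norm_mul, Real.norm_of_nonneg (Real.rpow_nonneg (by linarith) _), Real.norm_eq_abs,
      abs_sub_comm, mul_assoc]
  have hscale : Tendsto (fun ε : ℝ => ε ^ (2 - p) / 2 ^ (-p)) (𝓝[>] 0) (𝓝 0) := by
    simpa using (tendsto_rpow_nhdsGT_zero (by linarith)).div_const (2 ^ (-p))
  refine (hbound.trans ((isBigO_refl _ _).mul hρ)).trans_tendsto (hscale.congr' ?_)
  filter_upwards [self_mem_nhdsWithin] with ε (hε : 0 < ε)
  rw [sub_eq_neg_add, Real.rpow_add hε, Real.rpow_two, Real.div_rpow hε.le zero_le_two]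
  ring

theorem tendsto_nhdsWithin_Icc_of_isBigO_sq {ρ : ℝ → ℝ} (hax : a < x)
    (hρ : (fun ε => ρ ε - (x - ε)) =O[𝓝[>] 0] fun ε => ε ^ 2) :
    Tendsto ρ (𝓝[>] 0) (𝓝[Icc a x] x) := by
  refine tendsto_nhdsWithin_iff.2 ⟨?_, ?_⟩
  · have hcont : Continuous fun ε : ℝ => x - ε := by fun_prop
    have hsub : Tendsto (fun ε : ℝ => x - ε) (𝓝[>] 0) (𝓝 x) := by
      simpa using (hcont.tendsto 0).mono_left nhdsWithin_le_nhds
    have hsq : Tendsto (fun ε : ℝ => ε ^ 2) (𝓝[>] 0) (𝓝 0) := by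
      simpa using ((continuous_pow 2).tendsto (0 : ℝ)).mono_left nhdsWithin_le_nhds
    simpa using (hρ.trans_tendsto hsq).add hsub
  · filter_upwards [eventually_abs_sub_le_half hρ,
      Ioo_mem_nhdsGT (half_pos (sub_pos.2 hax))] with ε h ⟨hε, hεa⟩
    obtain ⟨hlow, hhigh⟩ := abs_le.1 h
    exact ⟨by linarith, by linarith⟩

-- The fold `ρ` carries the right end `x + ε` of the window only to `x - ε + O(ε²)`; the mismatch
-- with the left end is negligible since the singularity is weaker than `|x - y| ^ (-2)`.
theorem hasPrincipalValue_of_fold {ρ : ℝ → ℝ} {p : ℝ} (hax : a < x) (hxb : x < b)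
    (hint : ∀ ε > 0, IntegrableOn f (Ioo a b \ Ioo (x - ε) (x + ε)))
    (hp₀ : 0 ≤ p) (hp₂ : p < 2) (hf : f =O[𝓝[<] x] fun y => (x - y) ^ (-p))
    (hρ : (fun ε => ρ ε - (x - ε)) =O[𝓝[>] 0] fun ε => ε ^ 2)
    (hfold : ∀ᶠ ε in 𝓝[>] 0, ∫ y in (x + ε)..b, f y = ∫ y in a..ρ ε, g y)
    (hfg : IntervalIntegrable (fun y => f y + g y) volume a x) :
    HasPrincipalValue f a b x (∫ y in a..x, (f y + g y)) := by
  refine ⟨hint, ?_⟩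
  have hρ_near := eventually_abs_sub_le_half hρ
  have hρx := tendsto_nhdsWithin_Icc_of_isBigO_sq hax hρ
  have hprim : ContinuousOn (fun t => ∫ y in a..t, (f y + g y)) (Icc a x) := by
    rw [← uIcc_of_le hax.le]
    exact intervalIntegral.continuousOn_primitive_interval' hfg left_mem_uIcc
  have hlim := ((hprim x ⟨hax.le, le_rfl⟩).tendsto.comp hρx).add
    (tendsto_intervalIntegral_of_isBigO_rpow hp₀ hp₂ hf hρ)
  rw [add_zero] at hlim
  refine hlim.congr' ?_
  filter_upwards [eventually_window_subset hax hxb, hfold, hρ_near,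
    hρx.eventually self_mem_nhdsWithin] with ε ⟨hε, ha, hb⟩ hfoldε hρε hρmem
  have hinterval {δ : ℝ} (hδ : 0 < δ) (hδε : δ ≤ ε) : IntervalIntegrable f volume a (x - δ) :=
    (intervalIntegrable_of_integrableOn_Ioo_diff_Ioo (by linarith) (by linarith) (by linarith)
      (hint δ hδ)).1
  have hfρ : IntervalIntegrable f volume a (ρ ε) :=
    (hinterval (half_pos hε) (by linarith)).mono_set <| by
      rw [uIcc_of_le hρmem.1, uIcc_of_le (by linarith)]
      exact Icc_subset_Icc_right (by linarith [(abs_le.1 hρε).2])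
  have hgρ : IntervalIntegrable g volume a (ρ ε) := by
    have hfgρ := hfg.mono_set (c := a) (d := ρ ε) <| by
      rw [uIcc_of_le hρmem.1, uIcc_of_le hax.le]
      exact Icc_subset_Icc_right hρmem.2
    exact (hfgρ.sub hfρ).congr fun y _ => by ring
  rw [setIntegral_Ioo_diff_Ioo ha.le (by linarith) hb.le (hint ε hε), hfoldε,
    ← intervalIntegral.integral_add_adjacent_intervals hfρ (hfρ.symm.trans (hinterval hε le_rfl)),
    Function.comp_apply, intervalIntegral.integral_add hfρ hgρ]
  ring

end PrincipalValue

section Reflection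

variable {x y : ℝ}

/-- The common denominator of `reflection x` and `reflectionInvariant x`. -/
noncomputable def reflectionDenom (x y : ℝ) : ℝ := x ^ 2 * (1 - y) + (1 - x) ^ 2 * y

/-- The projective involution of `[0, 1]` that exchanges the endpoints and fixes `x`. -/
noncomputable def reflection (x y : ℝ) : ℝ := x ^ 2 * (1 - y) / reflectionDenom x y

/-- The rational function of `y` invariant under `reflection x`, equal to `0` at the fixed point `x`
and to `1` at the endpoints. -/
noncomputable def reflectionInvariant (x y : ℝ) : ℝ := (x - y) ^ 2 / reflectionDenom x y

theorem reflectionDenom_pos (hx : x ∈ Ioo 0 1) (hy : y ∈ Icc 0 1) : 0 < reflectionDenom x y := by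
  rcases hy.1.eq_or_lt with rfl | hy₀
  · simpa [reflectionDenom] using pow_pos hx.1 2
  · exact add_pos_of_nonneg_of_pos (mul_nonneg (sq_nonneg x) (sub_nonneg.2 hy.2))
      (mul_pos (pow_pos (sub_pos.2 hx.2) 2) hy₀)

theorem hasDerivAt_reflectionDenom (x y : ℝ) : HasDerivAt (reflectionDenom x) (1 - 2 * x) y := by
  refine HasDerivAt.congr_deriv ((((hasDerivAt_id y).const_sub 1).const_mul (x ^ 2)).add
    ((hasDerivAt_id y).const_mul ((1 - x) ^ 2))) ?_
  ring

theorem hasDerivAt_reflection (h : reflectionDenom x y ≠ 0) :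
    HasDerivAt (reflection x) (-(x * (1 - x) / reflectionDenom x y) ^ 2) y := by
  refine HasDerivAt.congr_deriv ((((hasDerivAt_id y).const_sub 1).const_mul (x ^ 2)).div
    (hasDerivAt_reflectionDenom x y) h) ?_
  simp only [id]
  field_simp
  rw [reflectionDenom]
  ring

theorem hasDerivAt_reflectionInvariant (h : reflectionDenom x y ≠ 0) :
    HasDerivAt (reflectionInvariant x)
      (-((x - y) * (x * (1 - y) + (1 - x) * y) / reflectionDenom x y ^ 2)) y := by
  refine HasDerivAt.congr_deriv ((((hasDerivAt_id y).const_sub x).pow 2).div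
    (hasDerivAt_reflectionDenom x y) h) ?_
  simp only [id, Pi.pow_apply, Nat.cast_ofNat, Nat.add_one_sub_one, pow_one]
  field_simp
  rw [reflectionDenom]
  ring

theorem sub_reflection (h : reflectionDenom x y ≠ 0) :
    x - reflection x y = -(x * (1 - x) / reflectionDenom x y * (x - y)) := by
  rw [reflection]
  field_simp
  rw [reflectionDenom]
  ring

theorem one_sub_reflection (h : reflectionDenom x y ≠ 0) :
    1 - reflection x y = (1 - x) ^ 2 * y / reflectionDenom x y := by
  rw [reflection]
  field_simp
  rw [reflectionDenom]
  ring

theorem reflection_mul_one_sub_reflection (h : reflectionDenom x y ≠ 0) :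
    reflection x y * (1 - reflection x y) =
      (x * (1 - x) / reflectionDenom x y) ^ 2 * (y * (1 - y)) := by
  rw [one_sub_reflection h, reflection]
  ring

theorem self_sub_reflection (h : reflectionDenom x y ≠ 0) :
    y - reflection x y = -((x - y) * (x * (1 - y) + (1 - x) * y) / reflectionDenom x y) := by
  rw [reflection]
  field_simp
  rw [reflectionDenom]
  ring

theorem one_sub_reflectionInvariant (h : reflectionDenom x y ≠ 0) :
    1 - reflectionInvariant x y = y * (1 - y) / reflectionDenom x y := by
  rw [reflectionInvariant]
  field_simp
  rw [reflectionDenom]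
  ring

theorem reflection_zero (hx : x ≠ 0) : reflection x 0 = 1 := by
  simp [reflection, reflectionDenom, hx]

theorem reflection_nonneg (hx : x ∈ Ioo 0 1) (hy : y ∈ Icc 0 1) : 0 ≤ reflection x y :=
  div_nonneg (mul_nonneg (sq_nonneg x) (sub_nonneg.2 hy.2)) (reflectionDenom_pos hx hy).le

theorem reflection_le_one (hx : x ∈ Ioo 0 1) (hy : y ∈ Icc 0 1) : reflection x y ≤ 1 := by
  have hD := reflectionDenom_pos hx hy
  rw [← sub_nonneg, one_sub_reflection hD.ne']
  exact div_nonneg (mul_nonneg (sq_nonneg _) hy.1) hD.le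

theorem reflection_reflection (hx : x ∈ Ioo 0 1) (hy : y ∈ Icc 0 1) :
    reflection x (reflection x y) = y := by
  have hD := (reflectionDenom_pos hx hy).ne'
  have hx0 : x ≠ 0 := hx.1.ne'
  have hx1 : 1 - x ≠ 0 := (sub_pos.2 hx.2).ne'
  have hdenom : reflectionDenom x (reflection x y) =
      x ^ 2 * (1 - x) ^ 2 / reflectionDenom x y := by
    rw [reflectionDenom, one_sub_reflection hD, reflection]
    ring
  rw [reflection, hdenom, one_sub_reflection hD]
  field_simp

theorem reflection_add_sub_isBigO_sq (hx : x ∈ Ioo 0 1) :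
    (fun ε => reflection x (x + ε) - (x - ε)) =O[𝓝[>] 0] fun ε => ε ^ 2 := by
  have hdenom : Tendsto (fun ε => reflectionDenom x (x + ε)) (𝓝[>] 0)
      (𝓝 (reflectionDenom x x)) := by
    have hcont : Continuous fun ε => reflectionDenom x (x + ε) := by
      unfold reflectionDenom
      fun_prop
    simpa using (hcont.tendsto 0).mono_left nhdsWithin_le_nhds
  have hDx := reflectionDenom_pos hx (Ioo_subset_Icc_self hx)
  have hquot : Tendsto (fun ε => (1 - 2 * x) / reflectionDenom x (x + ε)) (𝓝[>] 0)
      (𝓝 ((1 - 2 * x) / reflectionDenom x x)) := tendsto_const_nhds.div hdenom hDx.ne'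
  refine (((hquot.isBigO_one ℝ).mul (isBigO_refl (fun ε : ℝ => ε ^ 2) _)).congr' ?_ (by simp))
  filter_upwards [hdenom.eventually_ne hDx.ne'] with ε hε
  rw [reflection]
  field_simp
  rw [reflectionDenom]
  ring

end Reflection

section Beta

variable {a b : ℝ}

theorem ofReal_rpow_mul_one_sub_rpow {r : ℝ} (hr : r ∈ Icc 0 1) :
    ((r ^ (a - 1) * (1 - r) ^ (b - 1) : ℝ) : ℂ) =
      (r : ℂ) ^ ((a : ℂ) - 1) * (1 - (r : ℂ)) ^ ((b : ℂ) - 1) := by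
  rw [Complex.ofReal_mul, Complex.ofReal_cpow hr.1, Complex.ofReal_cpow (sub_nonneg.2 hr.2)]
  push_cast
  rfl

theorem intervalIntegrable_rpow_mul_one_sub_rpow (ha : 0 < a) (hb : 0 < b) :
    IntervalIntegrable (fun r : ℝ => r ^ (a - 1) * (1 - r) ^ (b - 1)) volume 0 1 := by
  have hcomplex := Complex.betaIntegral_convergent (u := a) (v := b) (by simpa) (by simpa)
  rw [intervalIntegrable_iff_integrableOn_Icc_of_le zero_le_one] at hcomplex ⊢
  refine IntegrableOn.congr_fun hcomplex.re (fun r hr => ?_) measurableSet_Icc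
  simp only [← ofReal_rpow_mul_one_sub_rpow hr, RCLike.re_eq_complex_re, Complex.ofReal_re]

theorem integral_rpow_mul_one_sub_rpow (ha : 0 < a) (hb : 0 < b) :
    ∫ r in (0 : ℝ)..1, r ^ (a - 1) * (1 - r) ^ (b - 1) = ProbabilityTheory.beta a b := by
  have hcast : Complex.betaIntegral a b =
      ((∫ r in (0 : ℝ)..1, r ^ (a - 1) * (1 - r) ^ (b - 1) : ℝ) : ℂ) := by
    rw [Complex.betaIntegral, ← intervalIntegral.integral_ofReal]
    refine intervalIntegral.integral_congr fun r hr => ?_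
    rw [uIcc_of_le zero_le_one] at hr
    exact (ofReal_rpow_mul_one_sub_rpow hr).symm
  rw [ProbabilityTheory.beta_eq_betaIntegralReal a b ha hb, hcast, Complex.ofReal_re]

end Beta

section WeightedKernel

variable {s x y : ℝ} {q : ℝ → ℝ}

/-- The kernel `sgn(x - y) |x - y|^(-2s)` of the fractional Laplacian on `(0, 1)`, multiplied by the
singular factor `(y(1 - y))^(s - 1)` that the derivative of `ω^s φ` carries. -/
noncomputable def weightedKernel (s x y : ℝ) : ℝ :=
  Real.sign (x - y) * |x - y| ^ (-(2 * s)) * (y * (1 - y)) ^ (s - 1)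

theorem weightedKernel_of_lt (h : y < x) :
    weightedKernel s x y = (x - y) ^ (-(2 * s)) * (y * (1 - y)) ^ (s - 1) := by
  rw [weightedKernel, Real.sign_of_pos (sub_pos.2 h), abs_of_pos (sub_pos.2 h), one_mul]

theorem intervalIntegrable_mul_one_sub_rpow_mul (hs : 0 < s) (hq : Continuous q) :
    IntervalIntegrable (fun y => (y * (1 - y)) ^ (s - 1) * q y) volume 0 1 := by
  refine ((intervalIntegrable_rpow_mul_one_sub_rpow hs hs).mul_continuousOn
    hq.continuousOn).congr fun y hy => ?_
  rw [uIoc_of_le zero_le_one] at hy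
  simp only [Real.mul_rpow hy.1.le (sub_nonneg.2 hy.2)]

theorem measurable_sign_mul_abs_rpow (p x : ℝ) :
    Measurable fun y => Real.sign (x - y) * |x - y| ^ p := by
  have hsign : Measurable Real.sign :=
    Measurable.ite measurableSet_Iio measurable_const
      (Measurable.ite measurableSet_Ioi measurable_const measurable_const)
  exact (hsign.comp (by fun_prop)).mul (by fun_prop)

theorem integrableOn_weightedKernel_mul (hs : 0 < s) (hq : Continuous q) {ε : ℝ} (hε : 0 < ε) :
    IntegrableOn (fun y => weightedKernel s x y * q y) (Ioo 0 1 \ Ioo (x - ε) (x + ε)) := by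
  have hweight := intervalIntegrable_mul_one_sub_rpow_mul hs hq
  rw [intervalIntegrable_iff_integrableOn_Ioo_of_le zero_le_one] at hweight
  have hbound : ∀ y ∈ Ioo (0 : ℝ) 1 \ Ioo (x - ε) (x + ε),
      ‖Real.sign (x - y) * |x - y| ^ (-(2 * s))‖ ≤ ε ^ (-(2 * s)) := by
    intro y hy
    have hεy : ε ≤ |x - y| := by
      by_contra! hlt
      rw [abs_lt] at hlt
      exact hy.2 ⟨by linarith, by linarith⟩
    have hsign : ‖Real.sign (x - y)‖ ≤ 1 := by
      rcases Real.sign_apply_eq (x - y) with h | h | h <;> simp [h]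
    rw [norm_mul, Real.norm_of_nonneg (Real.rpow_nonneg (abs_nonneg _) _)]
    calc ‖Real.sign (x - y)‖ * |x - y| ^ (-(2 * s)) ≤ 1 * |x - y| ^ (-(2 * s)) := by gcongr
      _ ≤ ε ^ (-(2 * s)) := by
        rw [one_mul]
        exact Real.rpow_le_rpow_of_nonpos hε hεy (by linarith)
  have hprod := (hweight.mono_set sdiff_subset).bdd_mul
    (measurable_sign_mul_abs_rpow (-(2 * s)) x).aestronglyMeasurable
    (ae_restrict_of_forall_mem (measurableSet_Ioo.diff measurableSet_Ioo) hbound)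
  simpa only [weightedKernel, mul_assoc, IntegrableOn] using hprod

theorem sign_mul_of_pos {m t : ℝ} (hm : 0 < m) : Real.sign (m * t) = Real.sign t := by
  rcases lt_trichotomy t 0 with ht | rfl | ht
  · rw [Real.sign_of_neg ht, Real.sign_of_neg (mul_neg_of_pos_of_neg hm ht)]
  · rw [mul_zero]
  · rw [Real.sign_of_pos ht, Real.sign_of_pos (mul_pos hm ht)]

theorem weightedKernel_reflection (hx : x ∈ Ioo 0 1) (hy : y ∈ Icc 0 1) :
    (x * (1 - x) / reflectionDenom x y) ^ 2 * weightedKernel s x (reflection x y) =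
      -weightedKernel s x y := by
  have hD := reflectionDenom_pos hx hy
  have hm : 0 < x * (1 - x) / reflectionDenom x y :=
    div_pos (mul_pos hx.1 (sub_pos.2 hx.2)) hD
  have hyy : 0 ≤ y * (1 - y) := mul_nonneg hy.1 (sub_nonneg.2 hy.2)
  simp only [weightedKernel]
  rw [sub_reflection hD.ne', reflection_mul_one_sub_reflection hD.ne']
  set m := x * (1 - x) / reflectionDenom x y
  have hcancel : m ^ 2 * m ^ (-(2 * s)) * (m ^ 2) ^ (s - 1) = 1 := by
    rw [← Real.rpow_natCast m 2, ← Real.rpow_mul hm.le, ← Real.rpow_add hm, ← Real.rpow_add hm]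
    convert Real.rpow_zero m using 2
    push_cast
    ring
  rw [Real.sign_neg, sign_mul_of_pos hm, abs_neg, abs_mul, abs_of_pos hm,
    Real.mul_rpow hm.le (abs_nonneg _), Real.mul_rpow (sq_nonneg m) hyy]
  linear_combination (-(Real.sign (x - y) * |x - y| ^ (-(2 * s)) * (y * (1 - y)) ^ (s - 1))) *
    hcancel

theorem weightedKernel_mul_isBigO (hx : x ∈ Ioo 0 1) (hq : Continuous q) :
    (fun y => weightedKernel s x y * q y) =O[𝓝[<] x] fun y => (x - y) ^ (-(2 * s)) := by
  have hweight : ContinuousAt (fun y => (y * (1 - y)) ^ (s - 1)) x :=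
    ContinuousAt.rpow_const (f := fun y => y * (1 - y)) (by fun_prop)
      (Or.inl (mul_pos hx.1 (sub_pos.2 hx.2)).ne')
  have hlim := (hweight.mul hq.continuousAt).tendsto.mono_left (nhdsWithin_le_nhds (s := Iio x))
  have hbdd := hlim.isBigO_one ℝ
  refine ((isBigO_refl (fun y => (x - y) ^ (-(2 * s))) _).mul hbdd).congr' ?_ (by simp)
  filter_upwards [self_mem_nhdsWithin] with y hy
  rw [weightedKernel_of_lt hy, mul_assoc, Pi.mul_apply]

theorem integral_weightedKernel_mul_reflection (hx : x ∈ Ioo 0 1) {t : ℝ} (ht : t ∈ Icc 0 1) :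
    ∫ y in t..1, weightedKernel s x y * q y =
      ∫ y in 0..reflection x t, -(weightedKernel s x y * q (reflection x y)) := by
  have hσ₀ := reflection_nonneg hx ht
  have hmem {y : ℝ} (hy : y ∈ Icc 0 (reflection x t)) : y ∈ Icc (0 : ℝ) 1 :=
    ⟨hy.1, hy.2.trans (reflection_le_one hx ht)⟩
  have hderiv {y : ℝ} (hy : y ∈ Icc 0 (reflection x t)) :=
    hasDerivAt_reflection (reflectionDenom_pos hx (hmem hy)).ne'
  have hsubst := integral_Icc_deriv_smul_of_deriv_nonpos
    (g := fun y => weightedKernel s x y * q y)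
    (fun y hy => (hderiv hy).continuousAt.continuousWithinAt)
    (fun y hy => hderiv (Ioo_subset_Icc_self hy)) (fun y _ => neg_nonpos.2 (sq_nonneg _)) hσ₀
  rw [reflection_reflection hx ht, reflection_zero hx.1.ne'] at hsubst
  rw [intervalIntegral.integral_neg, intervalIntegral.integral_of_le ht.2,
    intervalIntegral.integral_of_le hσ₀, ← integral_Icc_eq_integral_Ioc,
    ← integral_Icc_eq_integral_Ioc, ← neg_eq_iff_eq_neg, ← hsubst]
  refine setIntegral_congr_fun measurableSet_Icc fun y hy => ?_
  rw [smul_eq_mul, neg_mul, ← mul_assoc, weightedKernel_reflection hx (hmem hy), neg_mul, neg_neg]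

theorem hasPrincipalValue_weightedKernel_mul (hs : s ∈ Ioo 0 1) (hx : x ∈ Ioo 0 1)
    (hq : Continuous q) (hint : IntervalIntegrable
      (fun y => weightedKernel s x y * (q y - q (reflection x y))) volume 0 x) :
    HasPrincipalValue (fun y => weightedKernel s x y * q y) 0 1 x
      (∫ y in 0..x, weightedKernel s x y * (q y - q (reflection x y))) := by
  simp only [mul_sub, sub_eq_add_neg (weightedKernel _ _ _ * _)] at hint ⊢
  refine hasPrincipalValue_of_fold (p := 2 * s) hx.1 hx.2
    (fun ε hε => integrableOn_weightedKernel_mul hs.1 hq hε) (by linarith [hs.1])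
    (by linarith [hs.2]) (weightedKernel_mul_isBigO hx hq) (reflection_add_sub_isBigO_sq hx) ?_ hint
  filter_upwards [eventually_window_subset hx.1 hx.2] with ε ⟨hε, _, hε₁⟩
  exact integral_weightedKernel_mul_reflection hx ⟨by linarith [hx.1], hε₁.le⟩

theorem hasPrincipalValue_weightedKernel_one (hs : s ∈ Ioo 0 1) (hx : x ∈ Ioo 0 1) :
    HasPrincipalValue (weightedKernel s x) 0 1 x 0 := by
  simpa using
    hasPrincipalValue_weightedKernel_mul (q := fun _ => 1) hs hx continuous_const (by simp)

theorem deriv_reflectionInvariant_mul (hx : x ∈ Ioo 0 1) (hy : y ∈ Icc 0 x) :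
    deriv (reflectionInvariant x) y •
        (reflectionInvariant x y ^ (1 - s - 1) * (1 - reflectionInvariant x y) ^ (s - 1)) =
      weightedKernel s x y * (y - reflection x y) := by
  have hy₁ : y ∈ Icc 0 1 := ⟨hy.1, hy.2.trans hx.2.le⟩
  have hD := reflectionDenom_pos hx hy₁
  rw [(hasDerivAt_reflectionInvariant hD.ne').deriv]
  rcases hy.2.eq_or_lt with rfl | hyx
  · simp [weightedKernel]
  have hpow : ((x - y) ^ 2) ^ (-s) = (x - y) ^ (-(2 * s)) := by
    rw [← Real.rpow_natCast, ← Real.rpow_mul (sub_nonneg.2 hy.2)]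
    push_cast
    ring_nf
  have hDpow : reflectionDenom x y ^ (-s) * reflectionDenom x y ^ (s - 1) =
      (reflectionDenom x y)⁻¹ := by
    rw [← Real.rpow_add hD, ← Real.rpow_neg_one]
    ring_nf
  rw [one_sub_reflectionInvariant hD.ne', self_sub_reflection hD.ne', weightedKernel_of_lt hyx,
    reflectionInvariant, sub_sub_cancel_left, Real.div_rpow (sq_nonneg _) hD.le,
    Real.div_rpow (mul_nonneg hy₁.1 (sub_nonneg.2 hy₁.2)) hD.le, hpow, div_mul_div_comm, hDpow,
    smul_eq_mul]
  field_simp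

theorem differentiableAt_reflectionInvariant (hx : x ∈ Ioo 0 1) (hy : y ∈ Icc 0 1) :
    DifferentiableAt ℝ (reflectionInvariant x) y :=
  (hasDerivAt_reflectionInvariant (reflectionDenom_pos hx hy).ne').differentiableAt

theorem deriv_reflectionInvariant_nonpos (hx : x ∈ Ioo 0 1) (hy : y ∈ Icc 0 x) :
    deriv (reflectionInvariant x) y ≤ 0 := by
  have h₁ : 0 ≤ x - y := sub_nonneg.2 hy.2
  have h₂ : 0 ≤ 1 - y := sub_nonneg.2 (hy.2.trans hx.2.le)
  have h₃ : 0 ≤ 1 - x := sub_nonneg.2 hx.2.le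
  have h₄ : 0 ≤ y := hy.1
  have h₅ : 0 ≤ x := hx.1.le
  rw [(hasDerivAt_reflectionInvariant
    (reflectionDenom_pos hx ⟨h₄, sub_nonneg.1 h₂⟩).ne').deriv, neg_nonpos]
  positivity

theorem hasPrincipalValue_weightedKernel_mul_id (hs : s ∈ Ioo 0 1) (hx : x ∈ Ioo 0 1) :
    HasPrincipalValue (fun y => weightedKernel s x y * y) 0 1 x
      (-ProbabilityTheory.beta (1 - s) s) := by
  have hdiff (y : ℝ) (hy : y ∈ Icc 0 x) : DifferentiableAt ℝ (reflectionInvariant x) y :=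
    differentiableAt_reflectionInvariant hx ⟨hy.1, hy.2.trans hx.2.le⟩
  have hcont : ContinuousOn (reflectionInvariant x) (Icc 0 x) := fun y hy =>
    (hdiff y hy).continuousAt.continuousWithinAt
  have hderiv (y : ℝ) (hy : y ∈ Ioo 0 x) := (hdiff y (Ioo_subset_Icc_self hy)).hasDerivAt
  have hnonpos (y : ℝ) (hy : y ∈ Ioo 0 x) :=
    deriv_reflectionInvariant_nonpos hx (Ioo_subset_Icc_self hy)
  have hv₀ : reflectionInvariant x 0 = 1 := by
    simp [reflectionInvariant, reflectionDenom, hx.1.ne']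
  have hvx : reflectionInvariant x x = 0 := by simp [reflectionInvariant]
  have hpull : EqOn _ (fun y => weightedKernel s x y * (y - reflection x y)) (Icc 0 x) :=
    fun y hy => deriv_reflectionInvariant_mul hx hy
  have hint : IntervalIntegrable (fun y => weightedKernel s x y * (y - reflection x y))
      volume 0 x := by
    rw [intervalIntegrable_iff_integrableOn_Icc_of_le hx.1.le]
    refine IntegrableOn.congr_fun ?_ hpull measurableSet_Icc
    refine (integrableOn_Icc_deriv_smul_iff_of_deriv_nonpos
      (g := fun r => r ^ (1 - s - 1) * (1 - r) ^ (s - 1)) hcont hderiv hnonpos hx.1.le).2 ?_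
    rw [hv₀, hvx, ← intervalIntegrable_iff_integrableOn_Icc_of_le zero_le_one]
    exact intervalIntegrable_rpow_mul_one_sub_rpow (sub_pos.2 hs.2) hs.1
  have hvalue : ∫ y in 0..x, weightedKernel s x y * (y - reflection x y) =
      -ProbabilityTheory.beta (1 - s) s := by
    rw [intervalIntegral.integral_of_le hx.1.le, ← integral_Icc_eq_integral_Ioc,
      ← setIntegral_congr_fun measurableSet_Icc hpull, integral_Icc_deriv_smul_of_deriv_nonpos
        (g := fun r => r ^ (1 - s - 1) * (1 - r) ^ (s - 1)) hcont hderiv hnonpos hx.1.le,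
      hv₀, hvx, integral_Icc_eq_integral_Ioc, ← intervalIntegral.integral_of_le zero_le_one,
      integral_rpow_mul_one_sub_rpow (sub_pos.2 hs.2) hs.1]
  exact hvalue ▸ hasPrincipalValue_weightedKernel_mul hs hx continuous_id hint

theorem hasDerivAt_abs_sub_rpow (p : ℝ) (h : y ≠ x) :
    HasDerivAt (fun t => |x - t| ^ p) (-(p * (Real.sign (x - y) * |x - y| ^ (p - 1)))) y := by
  have hne : x - y ≠ 0 := sub_ne_zero.2 h.symm
  have habs : HasDerivAt (fun t : ℝ => |t|) (Real.sign (x - y)) (x - y) := by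
    rcases hne.lt_or_gt with hneg | hpos
    · rw [Real.sign_of_neg hneg]
      exact hasDerivAt_abs_neg hneg
    · rw [Real.sign_of_pos hpos]
      exact hasDerivAt_abs_pos hpos
  refine ((habs.comp_const_sub x y).rpow_const (p := p) (Or.inl (abs_ne_zero.2 hne))).congr_deriv ?_
  ring

theorem tendsto_rpow_mul_sub_of_hasDerivAt {u : ℝ → ℝ} {u' p : ℝ} (hu : HasDerivAt u u' x)
    (hp : -1 < p) :
    Tendsto (fun ε => ε ^ p * (u (x - ε) - u (x + ε))) (𝓝[>] 0) (𝓝 0) := by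
  have hjump : HasDerivAt (fun ε => u (x - ε) - u (x + ε)) (-u' - u') 0 :=
    HasDerivAt.sub (HasDerivAt.comp_const_sub x 0 (by simpa using hu))
      (HasDerivAt.comp_const_add x 0 (by simpa using hu))
  have hlinear : (fun ε => u (x - ε) - u (x + ε)) =O[𝓝[>] 0] fun ε => ε := by
    simpa using hjump.isBigO_sub.mono nhdsWithin_le_nhds
  refine ((isBigO_refl (fun ε : ℝ => ε ^ p) _).mul hlinear).trans_tendsto
    ((tendsto_rpow_nhdsGT_zero (p := p + 1) (by linarith)).congr' ?_)
  filter_upwards [self_mem_nhdsWithin] with ε (hε : 0 < ε)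
  rw [Real.rpow_add_one hε.ne']

theorem hasDerivAt_abs_sub_rpow_mul {φ : ℝ → ℝ} {q' : ℝ} (hy : y ∈ Ioo 0 1) (hyx : y ≠ x)
    (hderiv : HasDerivAt (fun t => (t * (1 - t)) ^ s * φ t) ((y * (1 - y)) ^ (s - 1) * q') y) :
    HasDerivAt (fun t => |x - t| ^ (1 - 2 * s) * ((t * (1 - t)) ^ s * φ t))
      (weightedKernel s x y * ((x - y) * q' - (1 - 2 * s) * (y * (1 - y) * φ y))) y := by
  have hne : x - y ≠ 0 := sub_ne_zero.2 hyx.symm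
  have hweight : (y * (1 - y)) ^ s = (y * (1 - y)) ^ (s - 1) * (y * (1 - y)) := by
    rw [← Real.rpow_add_one (mul_pos hy.1 (sub_pos.2 hy.2)).ne', sub_add_cancel]
  have habs : |x - y| = Real.sign (x - y) * (x - y) := by
    rcases hne.lt_or_gt with h | h
    · rw [Real.sign_of_neg h, abs_of_neg h, neg_one_mul]
    · rw [Real.sign_of_pos h, abs_of_pos h, one_mul]
  have hkernel : |x - y| ^ (1 - 2 * s) =
      Real.sign (x - y) * |x - y| ^ (-(2 * s)) * (x - y) := by
    rw [sub_eq_neg_add 1 (2 * s), Real.rpow_add_one (abs_ne_zero.2 hne), mul_right_comm, ← habs,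
      mul_comm]
  refine ((hasDerivAt_abs_sub_rpow (1 - 2 * s) hyx).mul hderiv).congr_deriv ?_
  rw [sub_sub_cancel_left, hkernel, hweight, weightedKernel]
  ring

-- The integrand is the derivative of `y ↦ |x - y| ^ (1 - 2 * s) * (y * (1 - y)) ^ s * φ y`, which
-- vanishes at both endpoints.
theorem hasPrincipalValue_weightedKernel_mul_of_hasDerivAt (hs : s ∈ Ioo 0 1) (hx : x ∈ Ioo 0 1)
    {φ : ℝ → ℝ} (hφ : Continuous φ) (hq : Continuous q)
    (hderiv : ∀ y ∈ Ioo (0 : ℝ) 1,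
      HasDerivAt (fun t => (t * (1 - t)) ^ s * φ t) ((y * (1 - y)) ^ (s - 1) * q y) y) :
    HasPrincipalValue
      (fun y => weightedKernel s x y * ((x - y) * q y - (1 - 2 * s) * (y * (1 - y) * φ y)))
      0 1 x 0 := by
  have hu : Continuous fun t => (t * (1 - t)) ^ s * φ t :=
    (Continuous.rpow_const (by fun_prop) fun _ => Or.inr hs.1.le).mul hφ
  have hF : ContinuousOn (fun t => |x - t| ^ (1 - 2 * s) * ((t * (1 - t)) ^ s * φ t))
      (Icc 0 1 \ {x}) :=
    ContinuousOn.mul (ContinuousOn.rpow_const (by fun_prop) fun y hy =>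
      Or.inl (abs_ne_zero.2 (sub_ne_zero.2 (Ne.symm hy.2)))) hu.continuousOn
  have hPV := hasPrincipalValue_of_hasDerivAt hx.1 hx.2
    (fun ε hε => integrableOn_weightedKernel_mul hs.1 (by fun_prop) hε) hF
    (fun y hy hyx => hasDerivAt_abs_sub_rpow_mul hy hyx (hderiv y hy))
    ((tendsto_rpow_mul_sub_of_hasDerivAt (p := 1 - 2 * s) (hderiv x hx)
      (by linarith [hs.2])).congr' ?_)
  · simpa [Real.zero_rpow hs.1.ne'] using hPV
  · filter_upwards [self_mem_nhdsWithin] with ε (hε : 0 < ε)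
    simp only [sub_sub_cancel, sub_add_cancel_left, abs_neg, abs_of_pos hε]
    ring

end WeightedKernel

section Gegenbauer

theorem gegen_add_two_eq_div (l : ℝ) (n : ℕ) (x : ℝ) :
    gegen l (n + 2) x =
      (2 * x * (n + 1 + l) * gegen l (n + 1) x - (n + 2 * l) * gegen l n x) / (n + 2) := by
  rw [gegen]
  ring

theorem gegen_add_two (l : ℝ) (n : ℕ) (x : ℝ) :
    (n + 2) * gegen l (n + 2) x =
      2 * x * (n + 1 + l) * gegen l (n + 1) x - (n + 2 * l) * gegen l n x := by
  rw [gegen_add_two_eq_div, mul_div_cancel₀ _ (by positivity)]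

theorem continuous_gegen (l : ℝ) (n : ℕ) : Continuous (gegen l n) := by
  induction n using Nat.twoStepInduction with
  | zero => exact continuous_const
  | one => exact continuous_const_mul (2 * l)
  | more n ih₀ ih₁ =>
    have h : Continuous fun x => (2 * x * ((n : ℝ) + 2 + l - 1) * gegen l (n + 1) x -
        ((n : ℝ) + 2 + 2 * l - 2) * gegen l n x) / ((n : ℝ) + 2) := by fun_prop
    exact h

theorem hasDerivAt_gegen_and_succ (l : ℝ) (n : ℕ) {x : ℝ} (hx : 1 - x ^ 2 ≠ 0) :
    HasDerivAt (gegen l n)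
        (((n + 2 * l) * x * gegen l n x - (n + 1) * gegen l (n + 1) x) / (1 - x ^ 2)) x ∧
      HasDerivAt (gegen l (n + 1))
        (((n + 2 * l) * gegen l n x - (n + 1) * x * gegen l (n + 1) x) / (1 - x ^ 2)) x := by
  induction n with
  | zero =>
    constructor
    · refine (hasDerivAt_const x (1 : ℝ)).congr_deriv ?_
      simp [gegen]
    · refine ((hasDerivAt_id x).const_mul (2 * l)).congr_deriv ?_
      simp only [gegen]
      field_simp
      push_cast
      ring
  | succ n ih =>
    obtain ⟨ih₀, ih₁⟩ := ih
    have hrec := gegen_add_two l n x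
    have hn : (n : ℝ) + 2 ≠ 0 := by positivity
    constructor
    · refine ih₁.congr_deriv ?_
      field_simp
      push_cast
      linear_combination hrec
    · have hstep := (((((hasDerivAt_id x).const_mul 2).mul_const ((n : ℝ) + 2 + l - 1)).mul
        ih₁).sub (ih₀.const_mul ((n : ℝ) + 2 + 2 * l - 2))).div_const ((n : ℝ) + 2)
      refine hstep.congr_deriv ?_
      simp only [id]
      field_simp
      push_cast
      linear_combination (n + 2) * x * hrec

variable {s x y : ℝ}

/-- The polynomial `Q` in `d/dy [(y(1 - y))^s C_n(2y - 1)] = (y(1 - y))^(s - 1) Q(y)`, where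
`C_n` is the Gegenbauer polynomial of parameter `s + 1/2`. -/
noncomputable def weightedGegenDeriv (s : ℝ) (n : ℕ) (y : ℝ) : ℝ :=
  (n + 1) / 2 * ((2 * y - 1) * gegen (s + 1 / 2) n (2 * y - 1) -
    gegen (s + 1 / 2) (n + 1) (2 * y - 1))

/-- The polynomial whose product with `weightedKernel s x` is the derivative of
`|x - y|^(1 - 2s) (y(1 - y))^s C_n(2y - 1)` in `y`. -/
noncomputable def weightedGegenTotalDeriv (s x : ℝ) (n : ℕ) (y : ℝ) : ℝ :=
  (x - y) * weightedGegenDeriv s n y -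
    (1 - 2 * s) * (y * (1 - y) * gegen (s + 1 / 2) n (2 * y - 1))

theorem weightedGegenDeriv_zero : weightedGegenDeriv s 0 y = s * (1 - 2 * y) := by
  simp only [weightedGegenDeriv, gegen]
  push_cast
  ring

theorem weightedGegenDeriv_succ (n : ℕ) : weightedGegenDeriv s (n + 1) y = (n + 1 + 2 * s) / 2 *
    (gegen (s + 1 / 2) n (2 * y - 1) - (2 * y - 1) * gegen (s + 1 / 2) (n + 1) (2 * y - 1)) := by
  rw [weightedGegenDeriv]
  push_cast
  linear_combination (-1 / 2) * gegen_add_two (s + 1 / 2) n (2 * y - 1)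

theorem weightedGegenDeriv_one (x : ℝ) : weightedGegenDeriv s 1 y = (1 + 2 * s) *
    ((2 * s + 1) * (2 * x - 1) * weightedGegenDeriv s 0 y + 2 * s ^ 2 +
      -(2 * (2 * s + 1)) * weightedGegenTotalDeriv s x 0 y) := by
  rw [weightedGegenTotalDeriv, weightedGegenDeriv_succ, weightedGegenDeriv_zero]
  simp only [gegen]
  push_cast
  ring

theorem weightedGegenDeriv_add_two (x : ℝ) (n : ℕ) :
    weightedGegenDeriv s (n + 2) y = (n + 2 + 2 * s) / (n + 2) ^ 2 *
      ((2 * n + 3 + 2 * s) * (2 * x - 1) * weightedGegenDeriv s (n + 1) y +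
        -(2 * (2 * n + 3 + 2 * s)) * weightedGegenTotalDeriv s x (n + 1) y +
        -((n + 1 + 2 * s) ^ 2 / (n + 1)) * weightedGegenDeriv s n y) := by
  rw [weightedGegenTotalDeriv, weightedGegenDeriv_succ (n + 1), weightedGegenDeriv_succ n,
    weightedGegenDeriv, gegen_add_two_eq_div]
  generalize gegen (s + 1 / 2) (n + 1) (2 * y - 1) = c₁
  generalize gegen (s + 1 / 2) n (2 * y - 1) = c₀
  push_cast
  field_simp
  ring

theorem hasDerivAt_mul_one_sub_rpow_mul_gegen (n : ℕ) (hy : y ∈ Ioo 0 1) :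
    HasDerivAt (fun t => (t * (1 - t)) ^ s * gegen (s + 1 / 2) n (2 * t - 1))
      ((y * (1 - y)) ^ (s - 1) * weightedGegenDeriv s n y) y := by
  have hy₀ : y ≠ 0 := hy.1.ne'
  have hy₁ : 1 - y ≠ 0 := (sub_pos.2 hy.2).ne'
  have hw : y * (1 - y) ≠ 0 := mul_ne_zero hy₀ hy₁
  have hY : 1 - (2 * y - 1) ^ 2 = 4 * (y * (1 - y)) := by ring
  have hweight := ((hasDerivAt_id y).mul ((hasDerivAt_id y).const_sub 1)).rpow_const (p := s)
    (Or.inl hw)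
  have hgegen := (hasDerivAt_gegen_and_succ (s + 1 / 2) n (x := 2 * y - 1)
    (by rw [hY]; positivity)).1.comp y (((hasDerivAt_id y).const_mul 2).sub_const 1)
  have hpow : (y * (1 - y)) ^ s = (y * (1 - y)) ^ (s - 1) * (y * (1 - y)) := by
    rw [← Real.rpow_add_one hw, sub_add_cancel]
  refine (hweight.mul hgegen).congr_deriv ?_
  simp only [id, Pi.mul_apply, Function.comp_apply, hY, hpow, weightedGegenDeriv]
  generalize (y * (1 - y)) ^ (s - 1) = w
  generalize gegen (s + 1 / 2) n (2 * y - 1) = c₀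
  generalize gegen (s + 1 / 2) (n + 1) (2 * y - 1) = c₁
  field_simp
  ring

theorem continuous_weightedGegenDeriv (s : ℝ) (n : ℕ) : Continuous (weightedGegenDeriv s n) := by
  have h (m : ℕ) : Continuous fun y : ℝ => gegen (s + 1 / 2) m (2 * y - 1) :=
    (continuous_gegen _ m).comp (by fun_prop)
  exact continuous_const.mul ((Continuous.mul (by fun_prop) (h n)).sub (h (n + 1)))

theorem deriv_rpow_mul_rpow_mul_gegen (n : ℕ) (hy : y ∈ Ioo 0 1) :
    deriv (fun t => (t - 0) ^ s * (1 - t) ^ s * gegen (s + 1 / 2) n (2 * t - 1)) y =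
      (y * (1 - y)) ^ (s - 1) * weightedGegenDeriv s n y := by
  rw [← (hasDerivAt_mul_one_sub_rpow_mul_gegen n hy).deriv]
  refine EventuallyEq.deriv_eq ?_
  filter_upwards [isOpen_Ioo.mem_nhds hy] with t ht
  rw [sub_zero, Real.mul_rpow ht.1.le (sub_nonneg.2 ht.2.le)]

theorem hasPrincipalValue_weightedGegenTotalDeriv (hs : s ∈ Ioo 0 1) (hx : x ∈ Ioo 0 1) (n : ℕ) :
    HasPrincipalValue (fun y => weightedKernel s x y * weightedGegenTotalDeriv s x n y) 0 1 x 0 :=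
  hasPrincipalValue_weightedKernel_mul_of_hasDerivAt hs hx
    ((continuous_gegen (s + 1 / 2) n).comp (by fun_prop)) (continuous_weightedGegenDeriv s n)
    fun _ hy => hasDerivAt_mul_one_sub_rpow_mul_gegen n hy

end Gegenbauer

section Eigenvalue

variable {s x : ℝ}

/-- The eigenvalue `Γ(2s + n + 1) / n!` of the weighted fractional Laplacian on `(0, 1)` that
belongs to the Gegenbauer polynomial of degree `n`. -/
noncomputable def gegenEigenvalue (s : ℝ) (n : ℕ) : ℝ :=
  Real.Gamma (2 * s + n + 1) / n.factorial

theorem gegenEigenvalue_succ (hs : 0 < s) (n : ℕ) :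
    gegenEigenvalue s (n + 1) = (2 * s + n + 1) / (n + 1) * gegenEigenvalue s n := by
  have hshift : 2 * s + ((n + 1 : ℕ) : ℝ) + 1 = (2 * s + n + 1) + 1 := by
    push_cast
    ring
  rw [gegenEigenvalue, gegenEigenvalue, hshift, Real.Gamma_add_one (by positivity),
    Nat.factorial_succ, div_mul_div_comm]
  push_cast
  rfl

theorem C1_pos (hs : s ∈ Ioo 0 1) : 0 < C1 s :=
  div_pos
    (mul_pos (mul_pos (by positivity) hs.1) (Real.Gamma_pos_of_pos (by linarith [hs.1])))
    (mul_pos (Real.sqrt_pos.2 Real.pi_pos) (Real.Gamma_pos_of_pos (sub_pos.2 hs.2)))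

theorem C1_mul_beta (hs : s ∈ Ioo 0 1) :
    C1 s * ProbabilityTheory.beta (1 - s) s = Real.Gamma (2 * s + 1) := by
  have hs₀ : s ≠ 0 := hs.1.ne'
  have hΓ : Real.Gamma (1 - s) ≠ 0 := (Real.Gamma_pos_of_pos (sub_pos.2 hs.2)).ne'
  have hπ : √Real.pi ≠ 0 := (Real.sqrt_pos.2 Real.pi_pos).ne'
  have htwo : (2 : ℝ) ^ (2 * s) * 2 ^ (1 - 2 * s) = 2 := by
    rw [← Real.rpow_add two_pos, add_sub_cancel, Real.rpow_one]
  calc C1 s * ProbabilityTheory.beta (1 - s) s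
      = s * 2 ^ (2 * s) * (Real.Gamma s * Real.Gamma (s + 1 / 2)) / √Real.pi := by
        rw [C1, ProbabilityTheory.beta, sub_add_cancel, Real.Gamma_one]
        field_simp
    _ = s * (2 ^ (2 * s) * 2 ^ (1 - 2 * s)) * Real.Gamma (2 * s) := by
        rw [Real.Gamma_mul_Gamma_add_half]
        field_simp
    _ = Real.Gamma (2 * s + 1) := by
        rw [htwo, Real.Gamma_add_one (mul_ne_zero two_ne_zero hs₀)]
        ring

theorem hasPrincipalValue_weightedGegenDeriv_zero (hs : s ∈ Ioo 0 1) (hx : x ∈ Ioo 0 1) :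
    HasPrincipalValue (fun y => weightedKernel s x y * weightedGegenDeriv s 0 y) 0 1 x
      (2 * s / C1 s * gegenEigenvalue s 0) := by
  have hvalue : s * 0 + -(2 * s) * -ProbabilityTheory.beta (1 - s) s =
      2 * s / C1 s * gegenEigenvalue s 0 := by
    have hC := (C1_pos hs).ne'
    simp only [gegenEigenvalue, Nat.cast_zero, add_zero, Nat.factorial_zero, Nat.cast_one, div_one,
      ← C1_mul_beta hs]
    field_simp
    ring
  rw [← hvalue]
  refine (((hasPrincipalValue_weightedKernel_one hs hx).const_mul s).add
    ((hasPrincipalValue_weightedKernel_mul_id hs hx).const_mul (-(2 * s)))).congr fun y _ => ?_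
  simp only [weightedGegenDeriv_zero]
  ring

theorem hasPrincipalValue_weightedGegenDeriv (hs : s ∈ Ioo 0 1) (hx : x ∈ Ioo 0 1) (n : ℕ) :
    HasPrincipalValue (fun y => weightedKernel s x y * weightedGegenDeriv s n y) 0 1 x
      (2 * s / C1 s * (gegenEigenvalue s n * gegen (s + 1 / 2) n (2 * x - 1))) := by
  induction n using Nat.twoStepInduction with
  | zero => simpa only [gegen, mul_one] using hasPrincipalValue_weightedGegenDeriv_zero hs hx
  | one =>
    have hPV := (((hasPrincipalValue_weightedGegenDeriv_zero hs hx).const_mul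
      ((2 * s + 1) * (2 * x - 1))).add
      (((hasPrincipalValue_weightedKernel_one hs hx).const_mul (2 * s ^ 2)).add
      ((hasPrincipalValue_weightedGegenTotalDeriv hs hx 0).const_mul
        (-(2 * (2 * s + 1)))))).const_mul (1 + 2 * s)
    convert hPV.congr fun y _ => ?_ using 1
    · have heig := gegenEigenvalue_succ hs.1 0
      rw [zero_add, Nat.cast_zero] at heig
      rw [heig]
      simp only [gegen]
      ring
    · simp only [weightedGegenDeriv_one x]
      ring
  | more n ih₀ ih₁ =>
    have hPV := (((ih₁.const_mul ((2 * n + 3 + 2 * s) * (2 * x - 1))).add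
      ((hasPrincipalValue_weightedGegenTotalDeriv hs hx (n + 1)).const_mul
        (-(2 * (2 * n + 3 + 2 * s))))).add
      (ih₀.const_mul (-((n + 1 + 2 * s) ^ 2 / (n + 1))))).const_mul
        ((n + 2 + 2 * s) / (n + 2) ^ 2)
    convert hPV.congr fun y _ => ?_ using 1
    · rw [gegen_add_two_eq_div, gegenEigenvalue_succ hs.1 (n + 1), gegenEigenvalue_succ hs.1 n]
      generalize gegen (s + 1 / 2) (n + 1) (2 * x - 1) = c₁
      generalize gegen (s + 1 / 2) n (2 * x - 1) = c₀
      push_cast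
      field_simp
      ring
    · simp only [weightedGegenDeriv_add_two x]
      ring

end Eigenvalue

theorem stmt11 (s : ℝ) (hs : s ∈ Set.Ioo (0 : ℝ) 1) (n : ℕ) :
    ∀ x ∈ Set.Ioo (0 : ℝ) 1,
      WFL s 0 1 (fun t => gegen (s + 1 / 2) n (2 * t - 1)) x
        ((Real.Gamma (2 * s + n + 1) / (n.factorial : ℝ)) *
          gegen (s + 1 / 2) n (2 * x - 1)) := by
  intro x hx
  have hPV : HasPrincipalValue (fun y => Real.sign (x - y) * |x - y| ^ (-(2 * s)) *
      deriv (fun t => (t - 0) ^ s * (1 - t) ^ s * gegen (s + 1 / 2) n (2 * t - 1)) y) 0 1 x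
      (2 * s / C1 s * (gegenEigenvalue s n * gegen (s + 1 / 2) n (2 * x - 1))) :=
    (hasPrincipalValue_weightedGegenDeriv hs hx n).congr fun y hy => by
      simp only [deriv_rpow_mul_rpow_mul_gegen n hy, weightedKernel]
      ring
  have hcancel : C1 s / (2 * s) * (2 * s / C1 s) = 1 :=
    (div_mul_div_cancel₀ (mul_ne_zero two_ne_zero hs.1.ne')).trans (div_self (C1_pos hs).ne')
  have hlim := hPV.2.const_mul (C1 s / (2 * s))
  rwa [← mul_assoc, hcancel, one_mul] at hlim
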